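/- arXiv:2010.15204 — 2 statements merged into one kernel-verified Lean document; each statement's English description precedes it below -/
import Mathlib

section
/- Let γ : [a,b] → S² ⊂ ℝ³ be a closed constant-speed curve of length L(γ) = 4π/√2 such that every point of S² has spherical distance at most π/4 from the image of γ. Then for almost every p ∈ S² (with respect to the surface measure), the circle C_{π/4}(p) meets γ in exactly two parameters, i.e. #{t ∈ [a,b) : d(γ(t), p) = π/4} = 2. -/
open MeasureTheory Set Real
open scoped ENNReal NNReal RealInnerProductSpace

noncomputable section

abbrev E3 := EuclideanSpace ℝ (Fin 3)

lemma aux_cos_iff {k x : ℝ} (hk0 : 0 < k) (hk1 : k < 1) (h1 : -(3 * π / 2) ≤ x) (h2 : x ≤ π) :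
    k < Real.cos x ↔ |x| < Real.arccos k := by
  have hb : Real.arccos k < π / 2 := Real.arccos_lt_pi_div_two.2 hk0
  have hb0 : 0 ≤ Real.arccos k := Real.arccos_nonneg k
  have hpi := Real.pi_pos
  have hc : Real.cos (Real.arccos k) = k := Real.cos_arccos (by linarith) hk1.le
  by_cases hx : -π ≤ x
  · have habs : |x| ≤ π := abs_le.2 ⟨hx, h2⟩
    rw [← Real.cos_abs x]
    nth_rewrite 1 [← hc]
    exact Real.strictAntiOn_cos.lt_iff_gt ⟨hb0, by linarith⟩ ⟨abs_nonneg x, habs⟩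
  · push Not at hx
    constructor
    · intro h
      have : Real.cos (-x) ≤ 0 := Real.cos_nonpos_of_pi_div_two_le_of_le (by linarith) (by linarith)
      rw [Real.cos_neg] at this
      linarith
    · intro h
      have := neg_abs_le x
      linarith

/-- planar section of the symmetric difference set -/
def secS (θ z : ℝ) : Set (ℝ × ℝ) :=
  {p | p.1 ^ 2 + p.2 ^ 2 + z ^ 2 < 1 ∧
    Xor (√2 / 2 * √(p.1 ^ 2 + p.2 ^ 2 + z ^ 2) < p.1)
      (√2 / 2 * √(p.1 ^ 2 + p.2 ^ 2 + z ^ 2) < p.1 * Real.cos θ + p.2 * Real.sin θ)}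

lemma aux_sector {θ z r : ℝ} (hθ0 : 0 ≤ θ) (hθ : θ < π / 2) (hr : 0 < r) (hz : |z| < r) :
    {φ ∈ Ioo (-π) π | (r * Real.cos φ, r * Real.sin φ) ∈ secS θ z} ⊆
      Icc (-Real.arccos (√2 / 2 * √(r ^ 2 + z ^ 2) / r))
          (θ - Real.arccos (√2 / 2 * √(r ^ 2 + z ^ 2) / r)) ∪
        Icc (Real.arccos (√2 / 2 * √(r ^ 2 + z ^ 2) / r))
          (θ + Real.arccos (√2 / 2 * √(r ^ 2 + z ^ 2) / r)) := by
  rintro φ ⟨⟨h1, h2⟩, h⟩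
  have hsq : (r * Real.cos φ) ^ 2 + (r * Real.sin φ) ^ 2 + z ^ 2 = r ^ 2 + z ^ 2 := by
    have := Real.sin_sq_add_cos_sq φ
    linear_combination r ^ 2 * this
  have hd : r * Real.cos φ * Real.cos θ + r * Real.sin φ * Real.sin θ = r * Real.cos (φ - θ) := by
    rw [Real.cos_sub]; ring
  simp only [secS, mem_ofPred_eq, hsq, hd] at h
  obtain ⟨-, h⟩ := h
  have hz2 : z ^ 2 < r ^ 2 := by
    rw [← sq_abs z]; exact pow_lt_pow_left₀ hz (abs_nonneg z) two_ne_zero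
  have hk1 : √2 / 2 * √(r ^ 2 + z ^ 2) / r < 1 := by
    rw [div_lt_one hr]
    have h2 : √2 * √(r ^ 2 + z ^ 2) < 2 * r := by
      rw [← Real.sqrt_mul (by norm_num)]
      rw [Real.sqrt_lt' (by linarith)]
      nlinarith
    linarith
  have hk0 : 0 < √2 / 2 * √(r ^ 2 + z ^ 2) / r := by positivity
  set k := √2 / 2 * √(r ^ 2 + z ^ 2) / r with hk
  have e1 : √2 / 2 * √(r ^ 2 + z ^ 2) = r * k := by rw [hk]; field_simp
  rw [e1, mul_lt_mul_iff_right₀ hr, mul_lt_mul_iff_right₀ hr,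
    aux_cos_iff hk0 hk1 (by linarith) (by linarith),
    aux_cos_iff hk0 hk1 (by linarith) (by linarith)] at h
  set β := Real.arccos k
  simp only [mem_union, mem_Icc]
  rcases h with ⟨ha, hb⟩ | ⟨ha, hb⟩
  · left
    rw [abs_lt] at ha
    rw [not_lt, le_abs'] at hb
    rcases hb with hb | hb
    · constructor <;> linarith
    · linarith
  · right
    rw [abs_lt] at ha
    rw [not_lt, le_abs'] at hb
    rcases hb with hb | hb
    · linarith
    · constructor <;> linarith

lemma aux_inner {θ z r : ℝ} (hθ0 : 0 ≤ θ) (hθ : θ < π / 2) (hr : 0 < r) :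
    volume {φ ∈ Ioo (-π) π | (r * Real.cos φ, r * Real.sin φ) ∈ secS θ z} ≤
      (Icc |z| √(1 - z ^ 2)).indicator (fun _ => ENNReal.ofReal (2 * θ)) r := by
  by_cases hmem : |z| < r ∧ r ≤ √(1 - z ^ 2)
  · rw [indicator_of_mem (show r ∈ Icc |z| √(1 - z ^ 2) from ⟨hmem.1.le, hmem.2⟩)]
    refine (measure_mono (aux_sector hθ0 hθ hr hmem.1)).trans ((measure_union_le _ _).trans ?_)
    rw [Real.volume_Icc, Real.volume_Icc, ← ENNReal.ofReal_add (by linarith) (by linarith)]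
    apply ENNReal.ofReal_le_ofReal
    linarith
  · have : {φ ∈ Ioo (-π) π | (r * Real.cos φ, r * Real.sin φ) ∈ secS θ z} = ∅ := by
      rw [eq_empty_iff_forall_notMem]
      rintro φ ⟨⟨h1, h2⟩, h⟩
      apply hmem
      have hsq : (r * Real.cos φ) ^ 2 + (r * Real.sin φ) ^ 2 + z ^ 2 = r ^ 2 + z ^ 2 := by
        have := Real.sin_sq_add_cos_sq φ
        linear_combination r ^ 2 * this
      have hd : r * Real.cos φ * Real.cos θ + r * Real.sin φ * Real.sin θ
          = r * Real.cos (φ - θ) := by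
        rw [Real.cos_sub]; ring
      simp only [secS, mem_ofPred_eq, hsq, hd] at h
      obtain ⟨hlt, h⟩ := h
      have key : √2 / 2 * √(r ^ 2 + z ^ 2) < r := by
        rcases h with ⟨ha, hb⟩ | ⟨ha, hb⟩
        · nlinarith [Real.cos_le_one φ]
        · nlinarith [Real.cos_le_one (φ - θ)]
      constructor
      · have h2 : √2 * √(r ^ 2 + z ^ 2) < 2 * r := by linarith
        rw [← Real.sqrt_mul (by norm_num), Real.sqrt_lt' (by linarith)] at h2
        apply abs_lt_of_sq_lt_sq _ hr.le
        nlinarith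
      · apply Real.le_sqrt_of_sq_le
        linarith
    rw [this]; simp

lemma measurableSet_secS (θ z : ℝ) : MeasurableSet (secS θ z) := by
  unfold secS Xor
  measurability

lemma aux_plane {θ : ℝ} (z : ℝ) (hθ0 : 0 ≤ θ) (hθ : θ < π / 2) :
    volume (secS θ z) ≤ ENNReal.ofReal (θ * (1 - 2 * z ^ 2)) := by
  rw [← lintegral_indicator_one (measurableSet_secS θ z), ← lintegral_comp_polarCoord_symm]
  have ht : polarCoord.target = Ioi (0 : ℝ) ×ˢ Ioo (-π) π := rfl
  rw [ht, Measure.volume_eq_prod, ← Measure.prod_restrict]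
  refine (lintegral_prod_le _).trans ?_
  have step : ∀ r ∈ Ioi (0:ℝ), (∫⁻ φ in Ioo (-π) π, ENNReal.ofReal r •
      (secS θ z).indicator (1 : ℝ × ℝ → ℝ≥0∞) (polarCoord.symm (r, φ))) ≤
      (Icc |z| √(1 - z ^ 2)).indicator (fun r => ENNReal.ofReal (2 * θ * r)) r := by
    intro r hr
    have hr : 0 < r := hr
    simp only [smul_eq_mul]
    rw [lintegral_const_mul' _ _ ENNReal.ofReal_ne_top]
    have e : ∀ φ, (secS θ z).indicator (1 : ℝ × ℝ → ℝ≥0∞) (polarCoord.symm (r, φ)) =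
        ({φ | (r * Real.cos φ, r * Real.sin φ) ∈ secS θ z}).indicator (1 : ℝ → ℝ≥0∞) φ := by
      intro φ; rfl
    have hm : MeasurableSet {φ | (r * Real.cos φ, r * Real.sin φ) ∈ secS θ z} := by
      apply (measurableSet_secS θ z).preimage
      fun_prop
    simp_rw [e]
    rw [lintegral_indicator_one hm, Measure.restrict_apply hm, inter_comm]
    refine (mul_le_mul_right (aux_inner hθ0 hθ hr) _).trans ?_
    by_cases hm : r ∈ Icc |z| √(1 - z ^ 2)
    · rw [indicator_of_mem hm, indicator_of_mem hm, ← ENNReal.ofReal_mul hr.le, mul_comm]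
    · rw [indicator_of_notMem hm, indicator_of_notMem hm, mul_zero]
  refine (setLIntegral_mono' measurableSet_Ioi step).trans ?_
  refine (setLIntegral_le_lintegral _ _).trans ?_
  rw [lintegral_indicator measurableSet_Icc]
  by_cases hle : |z| ≤ √(1 - z ^ 2)
  · rw [Measure.restrict_congr_set Ioc_ae_eq_Icc.symm, ← ofReal_integral_eq_lintegral_ofReal,
      ← intervalIntegral.integral_of_le hle]
    · apply ENNReal.ofReal_le_ofReal
      rw [intervalIntegral.integral_const_mul, integral_id, sq_abs]
      by_cases h1 : z ^ 2 ≤ 1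
      · rw [Real.sq_sqrt (by linarith)]; apply le_of_eq; ring
      · rw [Real.sqrt_eq_zero_of_nonpos (by linarith)] at hle
        have : z = 0 := abs_eq_zero.1 (le_antisymm hle (abs_nonneg z))
        subst this; norm_num at h1
    · exact (Continuous.integrableOn_Ioc (by fun_prop))
    · filter_upwards [ae_restrict_mem measurableSet_Ioc] with r hr
      have : 0 ≤ r := (abs_nonneg z).trans hr.1.le
      simp only [Pi.zero_apply]
      positivity
  · rw [Icc_eq_empty hle]; simp

lemma aux_zint {θ : ℝ} (hθ0 : 0 ≤ θ) :
    ∫⁻ z : ℝ, ENNReal.ofReal (θ * (1 - 2 * z ^ 2)) ≤ ENNReal.ofReal (2 * √2 / 3 * θ) := by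
  have h2 : √2 ^ 2 = 2 := Real.sq_sqrt (by norm_num)
  have : ∀ z : ℝ, ENNReal.ofReal (θ * (1 - 2 * z ^ 2)) ≤
      (Icc (-(√2 / 2)) (√2 / 2)).indicator (fun z => ENNReal.ofReal (θ * (1 - 2 * z ^ 2))) z := by
    intro z
    by_cases hz : z ∈ Icc (-(√2 / 2)) (√2 / 2)
    · rw [indicator_of_mem hz]
    · rw [indicator_of_notMem hz, nonpos_iff_eq_zero, ENNReal.ofReal_eq_zero]
      have : 1 - 2 * z ^ 2 ≤ 0 := by
        by_contra hcon
        apply hz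
        rw [mem_Icc, ← abs_le]
        apply abs_le_of_sq_le_sq _ (by positivity)
        nlinarith
      exact mul_nonpos_of_nonneg_of_nonpos hθ0 this
  refine (lintegral_mono this).trans ?_
  rw [lintegral_indicator measurableSet_Icc]
  have hle : -(√2 / 2) ≤ √2 / 2 := by have := Real.sqrt_nonneg 2; linarith
  rw [Measure.restrict_congr_set Ioc_ae_eq_Icc.symm, ← ofReal_integral_eq_lintegral_ofReal,
      ← intervalIntegral.integral_of_le hle]
  · apply ENNReal.ofReal_le_ofReal
    rw [intervalIntegral.integral_const_mul, intervalIntegral.integral_sub (by simp)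
      (Continuous.intervalIntegrable (by fun_prop) _ _), intervalIntegral.integral_const_mul,
      integral_pow]
    simp
    apply le_of_eq
    have h3 : √2 ^ 3 = 2 * √2 := by rw [pow_succ, h2]
    ring_nf
    rw [h3]; ring
  · exact (Continuous.integrableOn_Ioc (by fun_prop))
  · filter_upwards [ae_restrict_mem measurableSet_Ioc] with z hz
    have h1 : |z| ≤ √2 / 2 := abs_le.2 ⟨hz.1.le, hz.2⟩
    have : z ^ 2 ≤ (√2 / 2) ^ 2 := by rw [← sq_abs z]; gcongr
    simp only [Pi.zero_apply]
    apply mul_nonneg hθ0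
    nlinarith

lemma aux_space {θ : ℝ} (hθ0 : 0 ≤ θ) (hθ : θ < π / 2) :
    volume {w : E3 | ‖w‖ < 1 ∧ Xor (√2 / 2 * ‖w‖ < w 0)
      (√2 / 2 * ‖w‖ < w 0 * Real.cos θ + w 1 * Real.sin θ)} ≤ ENNReal.ofReal (2 * √2 / 3 * θ) := by
  let S : Set (ℝ × (ℝ × ℝ)) := {q | q.2 ∈ secS θ q.1}
  have hS : MeasurableSet S := by
    simp only [S, secS, Xor, mem_ofPred_eq]
    measurability
  have mp : MeasurePreserving (fun w : E3 => ((w 2, (w 0, w 1)) : ℝ × (ℝ × ℝ))) := by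
    have h1 := PiLp.volume_preserving_ofLp (Fin 3)
    have h2 := volume_preserving_piFinSuccAbove (fun _ : Fin 3 => ℝ) 2
    have h3 := (MeasurePreserving.id (volume : Measure ℝ)).prod (volume_preserving_finTwoArrow ℝ)
    exact h3.comp (h2.comp h1)
  have e : {w : E3 | ‖w‖ < 1 ∧ Xor (√2 / 2 * ‖w‖ < w 0)
      (√2 / 2 * ‖w‖ < w 0 * Real.cos θ + w 1 * Real.sin θ)} =
      (fun w : E3 => ((w 2, (w 0, w 1)) : ℝ × (ℝ × ℝ))) ⁻¹' S := by
    ext w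
    have hn : ‖w‖ = √(w 0 ^ 2 + w 1 ^ 2 + w 2 ^ 2) := by
      rw [EuclideanSpace.norm_eq]; simp [Fin.sum_univ_three]
    have hn1 : ‖w‖ < 1 ↔ w 0 ^ 2 + w 1 ^ 2 + w 2 ^ 2 < 1 := by
      rw [hn, Real.sqrt_lt' one_pos, one_pow]
    simp only [S, secS, mem_ofPred_eq, mem_preimage, hn1]
    rw [hn]
  rw [e, mp.measure_preimage hS.nullMeasurableSet]
  rw [Measure.volume_eq_prod, Measure.prod_apply hS]
  refine (lintegral_mono fun z => ?_).trans (aux_zint hθ0)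
  exact aux_plane z hθ0 hθ

/-- open cone over a spherical cap of radius `π/4` -/
def capH (u : E3) : Set E3 := {w | √2 / 2 * ‖w‖ < ⟪u, w⟫}

lemma isOpen_capH (u : E3) : IsOpen (capH u) :=
  isOpen_lt (by fun_prop) (by fun_prop)

lemma exists_frame {u v : E3} (hu : ‖u‖ = 1) (hv : ‖v‖ = 1) {θ : ℝ}
    (hcos : Real.cos θ = ⟪u, v⟫) (hs : Real.sin θ ≠ 0) :
    ∃ b : OrthonormalBasis (Fin 3) ℝ E3, u = b 0 ∧ v = Real.cos θ • b 0 + Real.sin θ • b 1 := by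
  set e : E3 := (Real.sin θ)⁻¹ • (v - Real.cos θ • u) with he
  have huu : ⟪u, u⟫ = 1 := by rw [real_inner_self_eq_norm_sq, hu]; norm_num
  have hvv : ⟪v, v⟫ = 1 := by rw [real_inner_self_eq_norm_sq, hv]; norm_num
  have hue : ⟪u, e⟫ = 0 := by
    rw [he, inner_smul_right, inner_sub_right, inner_smul_right, huu, ← hcos]; simp
  have hee : ⟪e, e⟫ = 1 := by
    rw [he, inner_smul_right, inner_smul_left, inner_sub_right, inner_sub_left, inner_sub_left,
      inner_smul_right, inner_smul_right, inner_smul_left, inner_smul_left, huu, hvv,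
      real_inner_comm u v, ← hcos]
    simp only [conj_trivial]
    have := Real.sin_sq_add_cos_sq θ
    field_simp
    linear_combination -this
  have hne : ‖e‖ = 1 := by
    rw [norm_eq_sqrt_real_inner, hee, Real.sqrt_one]
  let f : Fin 3 → E3 := ![u, e, 0]
  have horth : Orthonormal ℝ (({0, 1} : Set (Fin 3)).domRestrict f) := by
    constructor
    · rintro ⟨i, hi⟩
      rcases hi with rfl | hi
      · simpa [f] using hu
      · rw [mem_singleton_iff] at hi
        subst hi
        simpa [f] using hne
    · rintro ⟨i, hi⟩ ⟨j, hj⟩ hij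
      have hij' : i ≠ j := fun h => hij (Subtype.ext h)
      rcases hi with rfl | hi <;> rcases hj with rfl | hj
      · exact absurd rfl hij'
      · rw [mem_singleton_iff] at hj
        subst hj
        simpa [f] using hue
      · rw [mem_singleton_iff] at hi
        subst hi
        simpa [f, real_inner_comm] using hue
      · rw [mem_singleton_iff] at hi hj
        exact absurd (hi.trans hj.symm) hij'
  obtain ⟨b, hb⟩ := horth.exists_orthonormalBasis_extension_of_card_eq (by simp)
  have h0 : b 0 = u := by rw [hb 0 (by simp)]; rfl
  have h1 : b 1 = e := by rw [hb 1 (by simp)]; rfl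
  refine ⟨b, h0.symm, ?_⟩
  rw [h0, h1, he, smul_smul, mul_inv_cancel₀ hs, one_smul]
  abel

lemma crossing_le_angle {u v : E3} (hu : ‖u‖ = 1) (hv : ‖v‖ = 1) {θ : ℝ}
    (hcos : Real.cos θ = ⟪u, v⟫) (hθ0 : 0 ≤ θ) (hθ : θ < π / 2) :
    volume {w : E3 | ‖w‖ < 1 ∧ Xor (w ∈ capH u) (w ∈ capH v)} ≤
      ENNReal.ofReal (2 * √2 / 3 * θ) := by
  by_cases hs : Real.sin θ = 0
  · have hθz : θ = 0 := by
      rcases hθ0.eq_or_lt with h | h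
      · exact h.symm
      · exact absurd hs (Real.sin_pos_of_pos_of_lt_pi h (by linarith [Real.pi_pos])).ne'
    rw [hθz, Real.cos_zero] at hcos
    have : u = v := (inner_eq_one_iff_of_norm_eq_one hu hv).1 hcos.symm
    subst this
    simp
  · obtain ⟨b, h0, h1⟩ := exists_frame hu hv hcos hs
    have mp := b.measurePreserving_repr
    have hset : {w : E3 | ‖w‖ < 1 ∧ Xor (w ∈ capH u) (w ∈ capH v)} =
        b.repr ⁻¹' {w : E3 | ‖w‖ < 1 ∧ Xor (√2 / 2 * ‖w‖ < w 0)
      (√2 / 2 * ‖w‖ < w 0 * Real.cos θ + w 1 * Real.sin θ)} := by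
      ext w
      have e0 : b.repr w 0 = ⟪u, w⟫ := by rw [b.repr_apply_apply, ← h0]
      have e1 : b.repr w 0 * Real.cos θ + b.repr w 1 * Real.sin θ = ⟪v, w⟫ := by
        rw [b.repr_apply_apply, b.repr_apply_apply, h1, inner_add_left, inner_smul_left,
          inner_smul_left]
        simp; ring
      simp only [mem_preimage, mem_ofPred_eq, capH, LinearIsometryEquiv.norm_map, e1]
      rw [e0]
    rw [hset]
    exact (mp.measure_preimage_le _).trans (aux_space hθ0 hθ)

lemma crossing_le {u v : E3} (hu : ‖u‖ = 1) (hv : ‖v‖ = 1) {δ : ℝ} (hδ : ‖u - v‖ ≤ δ)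
    (hδ1 : δ ≤ 1) :
    volume {w : E3 | ‖w‖ < 1 ∧ Xor (w ∈ capH u) (w ∈ capH v)} ≤
      ENNReal.ofReal (2 * √2 / 3 * (2 * Real.arcsin (δ / 2))) := by
  have h0 : 0 ≤ ‖u - v‖ := norm_nonneg _
  have hin : ⟪u, v⟫ = 1 - ‖u - v‖ ^ 2 / 2 := by
    have := norm_sub_sq_real u v
    rw [hu, hv] at this
    linarith
  have hcos : Real.cos (2 * Real.arcsin (‖u - v‖ / 2)) = ⟪u, v⟫ := by
    rw [Real.cos_two_mul, Real.cos_sq', Real.sin_arcsin (by linarith) (by linarith), hin]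
    ring
  have hθ0 : 0 ≤ 2 * Real.arcsin (‖u - v‖ / 2) := by
    have := Real.arcsin_nonneg.2 (show 0 ≤ ‖u - v‖ / 2 by linarith)
    linarith
  have hθ : 2 * Real.arcsin (‖u - v‖ / 2) < π / 2 := by
    by_contra hcon
    have h2 : Real.arcsin (‖u - v‖ / 2) ≤ π / 2 := Real.arcsin_le_pi_div_two _
    have := Real.cos_nonpos_of_pi_div_two_le_of_le (not_lt.1 hcon) (by linarith)
    rw [hcos, hin] at this
    nlinarith
  refine (crossing_le_angle hu hv hcos hθ0 hθ).trans ?_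
  apply ENNReal.ofReal_le_ofReal
  have : Real.arcsin (‖u - v‖ / 2) ≤ Real.arcsin (δ / 2) := Real.monotone_arcsin (by linarith)
  gcongr

open scoped Pointwise in
lemma null_aux (Z : Set E3) (hZ : IsClosed Z) (q : E3)
    (h : ∀ w ∈ Z, ∀ σ : ℝ, 0 < σ → w + σ • q ∉ Z) : volume Z = 0 := by
  let c : ℕ → ℝ := fun n => 1 / ((n : ℝ) + 1)
  apply Measure.addHaar_eq_zero_of_disjoint_translates volume (fun n => c n • q) _ _
    hZ.measurableSet
  · rw [isBounded_iff_forall_norm_le]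
    refine ⟨‖q‖, ?_⟩
    rintro _ ⟨n, rfl⟩
    simp only [c]
    rw [norm_smul]
    have : ‖1 / ((n : ℝ) + 1)‖ ≤ 1 := by
      rw [Real.norm_of_nonneg (by positivity), div_le_one (by positivity)]
      have : (0:ℝ) ≤ n := n.cast_nonneg
      linarith
    nlinarith [norm_nonneg q]
  · have main : ∀ m n : ℕ, m < n → Disjoint (({c m • q} : Set E3) + Z) (({c n • q} : Set E3) + Z) := by
      intro m n hmn
      rw [Set.disjoint_left]
      intro y hy hy'
      rw [singleton_add, mem_image] at hy hy'
      obtain ⟨w, hw, rfl⟩ := hy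
      obtain ⟨w', hw', he⟩ := hy'
      have hc : c n < c m := by
        apply one_div_lt_one_div_of_lt (by positivity)
        have : (m:ℝ) < n := by exact_mod_cast hmn
        linarith
      apply h w hw (c m - c n) (by linarith)
      have : w + (c m - c n) • q = w' := by
        rw [sub_smul, ← sub_eq_zero]
        have := sub_eq_zero.2 he
        rw [← neg_eq_zero, ← this]
        abel
      rw [this]; exact hw'
    intro m n hmn
    rcases lt_or_gt_of_ne hmn with h1 | h1
    · exact main m n h1
    · exact (main n m h1).symm

lemma isClosed_touch (K : Set E3) (hK : IsCompact K) :
    IsClosed {w : E3 | ∃ q ∈ K, ⟪q, w⟫ = √2 / 2 * ‖w‖} := by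
  have hc : IsClosed {p : K × E3 | ⟪(p.1 : E3), p.2⟫ = √2 / 2 * ‖p.2‖} :=
    isClosed_eq (by fun_prop) (by fun_prop)
  have : CompactSpace K := isCompact_iff_compactSpace.1 hK
  have := isClosedMap_snd_of_compactSpace _ hc
  convert this using 1
  ext w
  simp

lemma null_max (K : Set E3) (hK : IsCompact K) (q₀ : E3) (hq : ‖q₀‖ = 1)
    (h : ∀ q ∈ K, √2 / 2 < ⟪q, q₀⟫) :
    volume {w : E3 | (∃ q ∈ K, ⟪q, w⟫ = √2 / 2 * ‖w‖) ∧ ∀ q ∈ K, ⟪q, w⟫ ≤ √2 / 2 * ‖w‖} = 0 := by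
  apply null_aux _ _ q₀
  · rintro w ⟨⟨q, hqK, hqe⟩, hw⟩ σ hσ ⟨-, hw'⟩
    have h1 := hw' q hqK
    rw [inner_add_right, inner_smul_right, hqe] at h1
    have h2 := norm_add_le w (σ • q₀)
    rw [norm_smul, hq, Real.norm_of_nonneg hσ.le] at h2
    have h3 := h q hqK
    have h4 : 0 ≤ √2 := Real.sqrt_nonneg 2
    nlinarith
  · refine (isClosed_touch K hK).inter ?_
    have e : {w : E3 | ∀ q ∈ K, ⟪q, w⟫ ≤ √2 / 2 * ‖w‖} =
        ⋂ q ∈ K, {w : E3 | ⟪q, w⟫ ≤ √2 / 2 * ‖w‖} := by ext w; simp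
    change IsClosed {w : E3 | ∀ q ∈ K, ⟪q, w⟫ ≤ √2 / 2 * ‖w‖}
    rw [e]
    exact isClosed_biInter fun q _ => isClosed_le (by fun_prop) (by fun_prop)

lemma null_min (K : Set E3) (hK : IsCompact K) (q₀ : E3) (hq : ‖q₀‖ = 1)
    (h : ∀ q ∈ K, √2 / 2 < ⟪q, q₀⟫) :
    volume {w : E3 | (∃ q ∈ K, ⟪q, w⟫ = √2 / 2 * ‖w‖) ∧ ∀ q ∈ K, √2 / 2 * ‖w‖ ≤ ⟪q, w⟫} = 0 := by
  apply null_aux _ _ q₀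
  · rintro w ⟨-, hw⟩ σ hσ ⟨⟨q, hqK, hqe⟩, -⟩
    have h1 := hw q hqK
    rw [inner_add_right, inner_smul_right] at hqe
    have h2 := norm_add_le w (σ • q₀)
    rw [norm_smul, hq, Real.norm_of_nonneg hσ.le] at h2
    have h3 := h q hqK
    have h4 : 0 ≤ √2 := Real.sqrt_nonneg 2
    nlinarith
  · refine (isClosed_touch K hK).inter ?_
    have e : {w : E3 | ∀ q ∈ K, √2 / 2 * ‖w‖ ≤ ⟪q, w⟫} =
        ⋂ q ∈ K, {w : E3 | √2 / 2 * ‖w‖ ≤ ⟪q, w⟫} := by ext w; simp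
    change IsClosed {w : E3 | ∀ q ∈ K, √2 / 2 * ‖w‖ ≤ ⟪q, w⟫}
    rw [e]
    exact isClosed_biInter fun q _ => isClosed_le (by fun_prop) (by fun_prop)

/-- `w` is a generic point: the curve never touches the circle of `w` without crossing it -/
def Good (γ : ℝ → E3) (a b : ℝ) (w : E3) : Prop :=
  ⟪γ a, w⟫ ≠ √2 / 2 * ‖w‖ ∧ ∀ t ∈ Ioo a b, ⟪γ t, w⟫ = √2 / 2 * ‖w‖ → ∀ r s, a ≤ r → r < t →
    t < s → s ≤ b → (∃ x ∈ Ioo r s, √2 / 2 * ‖w‖ < ⟪γ x, w⟫) ∧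
      ∃ y ∈ Ioo r s, ⟪γ y, w⟫ < √2 / 2 * ‖w‖

lemma sqrt_two_bound : √2 / 2 < 7 / 8 := by
  have : √2 < 7 / 4 := by
    rw [Real.sqrt_lt' (by norm_num)]; norm_num
  linarith

lemma ae_good {a b : ℝ} (hab : a < b) {γ : ℝ → E3} {C : ℝ} (hC : 0 ≤ C)
    (hsphere : ∀ t ∈ Icc a b, ‖γ t‖ = 1)
    (hlip : ∀ x ∈ Icc a b, ∀ y ∈ Icc a b, ‖γ x - γ y‖ ≤ C * |x - y|)
    (hcont : ContinuousOn γ (Icc a b)) :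
    ∀ᵐ w : E3, Good γ a b w := by
  have hK : ∀ r s, a ≤ r → s ≤ b → IsCompact (γ '' Icc r s) := fun r s hr hs =>
    isCompact_Icc.image_of_continuousOn (hcont.mono (Icc_subset_Icc hr hs))
  have hin : ∀ r s, a ≤ r → r ≤ s → s ≤ b → C * (s - r) < 1 / 2 → ∀ q ∈ γ '' Icc r s,
      √2 / 2 < ⟪q, γ r⟫ := by
    rintro r s hr hrs hs hCs _ ⟨t, ht, rfl⟩
    have htI : t ∈ Icc a b := ⟨hr.trans ht.1, ht.2.trans hs⟩
    have hrI : r ∈ Icc a b := ⟨hr, hrs.trans hs⟩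
    have h1 := hlip t htI r hrI
    have h2 := norm_sub_sq_real (γ t) (γ r)
    rw [hsphere t htI, hsphere r hrI] at h2
    have h3 : |t - r| ≤ s - r := by
      rw [abs_of_nonneg (by linarith [ht.1])]; linarith [ht.2]
    have h4 : ‖γ t - γ r‖ < 1 / 2 := by nlinarith
    have h5 := norm_nonneg (γ t - γ r)
    have := sqrt_two_bound
    nlinarith
  have hA : ∀ᵐ w : E3, ⟪γ a, w⟫ ≠ √2 / 2 * ‖w‖ := by
    have h0 := null_max (γ '' Icc a a) (hK a a le_rfl hab.le) (γ a)
      (hsphere a ⟨le_rfl, hab.le⟩) (hin a a le_rfl le_rfl hab.le (by simp))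
    rw [ae_iff]
    refine measure_mono_null ?_ h0
    intro w hw
    have hw : ⟪γ a, w⟫ = √2 / 2 * ‖w‖ := by simpa using hw
    simp [hw]
  have hB : ∀ r s : ℚ, ∀ᵐ w : E3, a ≤ r → (r : ℝ) ≤ s → (s : ℝ) ≤ b → C * ((s : ℝ) - r) < 1 / 2 →
      (∃ t ∈ Icc (r : ℝ) s, ⟪γ t, w⟫ = √2 / 2 * ‖w‖) →
      (∃ t ∈ Icc (r : ℝ) s, √2 / 2 * ‖w‖ < ⟪γ t, w⟫) ∧
      (∃ t ∈ Icc (r : ℝ) s, ⟪γ t, w⟫ < √2 / 2 * ‖w‖) := by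
    intro r s
    by_cases hyp : a ≤ r ∧ (r : ℝ) ≤ s ∧ (s : ℝ) ≤ b ∧ C * ((s : ℝ) - r) < 1 / 2
    · obtain ⟨h1, h2, h3, h4⟩ := hyp
      have hn1 := null_max _ (hK r s h1 h3) (γ r) (hsphere r ⟨h1, h2.trans h3⟩)
        (hin r s h1 h2 h3 h4)
      have hn2 := null_min _ (hK r s h1 h3) (γ r) (hsphere r ⟨h1, h2.trans h3⟩)
        (hin r s h1 h2 h3 h4)
      have hn1' := measure_eq_zero_iff_ae_notMem.1 hn1
      have hn2' := measure_eq_zero_iff_ae_notMem.1 hn2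
      filter_upwards [hn1', hn2'] with w hw1 hw2 _ _ _ _ ht
      obtain ⟨t, ht, hte⟩ := ht
      constructor
      · by_contra hcon
        push Not at hcon
        apply hw1
        refine ⟨⟨γ t, mem_image_of_mem _ ht, hte⟩, ?_⟩
        rintro _ ⟨t', ht', rfl⟩
        exact hcon t' ht'
      · by_contra hcon
        push Not at hcon
        apply hw2
        refine ⟨⟨γ t, mem_image_of_mem _ ht, hte⟩, ?_⟩
        rintro _ ⟨t', ht', rfl⟩
        exact hcon t' ht'
    · refine Filter.Eventually.of_forall fun w h1 h2 h3 h4 => ?_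
      exact absurd ⟨h1, h2, h3, h4⟩ hyp
  have hB' := ae_all_iff.2 fun r => ae_all_iff.2 fun s => hB r s
  filter_upwards [hA, hB'] with w hw1 hw2
  refine ⟨hw1, ?_⟩
  intro t ht hte r s har hrt hts hsb
  have hpos : 0 < 1 / (8 * (C + 1)) := by positivity
  obtain ⟨r', hr1, hr2⟩ := exists_rat_btwn (show max r (t - 1 / (8 * (C + 1))) < t by
    apply max_lt hrt; linarith)
  obtain ⟨s', hs1, hs2⟩ := exists_rat_btwn (show t < min s (t + 1 / (8 * (C + 1))) by
    apply lt_min hts; linarith)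
  rw [max_lt_iff] at hr1
  rw [lt_min_iff] at hs2
  have hCs : C * ((s' : ℝ) - r') < 1 / 2 := by
    have h1 : (s' : ℝ) - r' ≤ 1 / (4 * (C + 1)) := by
      have : 1 / (4 * (C + 1)) = 1 / (8 * (C + 1)) + 1 / (8 * (C + 1)) := by
        field_simp; norm_num
      linarith [hr1.2, hs2.2]
    have h2 : C * ((s' : ℝ) - r') ≤ C * (1 / (4 * (C + 1))) := by gcongr
    have h3 : C * (1 / (4 * (C + 1))) < 1 / 2 := by
      rw [mul_one_div, div_lt_div_iff₀ (by positivity) (by norm_num)]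
      linarith
    linarith
  obtain ⟨⟨x, hx, hxl⟩, ⟨y, hy, hyl⟩⟩ := hw2 r' s' (by linarith [hr1.1]) (by linarith)
    (by linarith [hs2.1]) hCs ⟨t, ⟨hr2.le, hs1.le⟩, hte⟩
  exact ⟨⟨x, ⟨by linarith [hx.1, hr1.1], by linarith [hx.2, hs2.1]⟩, hxl⟩,
    ⟨y, ⟨by linarith [hy.1, hr1.1], by linarith [hy.2, hs2.1]⟩, hyl⟩⟩

/-- uniform partition points -/
def grid (a b : ℝ) (n i : ℕ) : ℝ := a + i * ((b - a) / n)

lemma discrete_change (p : ℕ → Prop) {m n : ℕ} (hmn : m ≤ n) (h : ¬ (p m ↔ p n)) :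
    ∃ i, m ≤ i ∧ i < n ∧ Xor (p i) (p (i + 1)) := by
  induction n, hmn using Nat.le_induction with
  | base => exact absurd Iff.rfl h
  | succ k hk ih =>
    by_cases hm : (p m ↔ p k)
    · refine ⟨k, hk, Nat.lt_succ_self k, ?_⟩
      rw [xor_iff_not_iff]
      rwa [← hm]
    · obtain ⟨i, h1, h2, h3⟩ := ih hm
      exact ⟨i, h1, by omega, h3⟩

lemma grid_mono {a b : ℝ} (hab : a < b) (n : ℕ) {i j : ℕ} (h : i ≤ j) :
    grid a b n i ≤ grid a b n j := by
  unfold grid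
  have : (i:ℝ) ≤ j := by exact_mod_cast h
  have h2 : 0 ≤ (b - a) / n := div_nonneg (by linarith) (Nat.cast_nonneg n)
  nlinarith

lemma grid_mem {a b : ℝ} (hab : a < b) {n i : ℕ} (h : i ≤ n) :
    grid a b n i ∈ Icc a b := by
  have h1 := grid_mono hab n (Nat.zero_le i)
  have h2 := grid_mono hab n h
  refine ⟨by simpa [grid] using h1, h2.trans ?_⟩
  unfold grid
  rcases Nat.eq_zero_or_pos n with rfl | hn
  · simp [hab.le]
  · have : (n:ℝ) ≠ 0 := by positivity
    rw [mul_div_cancel₀ _ this]; linarith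

lemma exists_grid {a b x : ℝ} (hab : a < b) (hx : x ∈ Ioo a b) {n : ℕ} (hn : 0 < n) :
    ∃ i, i < n ∧ grid a b n i ≤ x ∧ x < grid a b n i + (b - a) / n := by
  have hn' : (0:ℝ) < n := by exact_mod_cast hn
  have hd : 0 < (b - a) / n := div_pos (by linarith) hn'
  have h0 : 0 ≤ (x - a) / ((b - a) / n) := div_nonneg (by linarith [hx.1]) hd.le
  refine ⟨⌊(x - a) / ((b - a) / n)⌋₊, ?_, ?_, ?_⟩
  · rw [Nat.floor_lt h0, div_lt_iff₀ hd, mul_div_cancel₀ _ hn'.ne']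
    linarith [hx.2]
  · have := Nat.floor_le h0
    rw [le_div_iff₀ hd] at this
    unfold grid; linarith
  · have := Nat.lt_floor_add_one ((x - a) / ((b - a) / n))
    rw [div_lt_iff₀ hd] at this
    unfold grid; linarith

lemma exists_change {a b : ℝ} (hab : a < b) {f : ℝ → ℝ} (hf : ContinuousOn f (Icc a b))
    {r s x y : ℝ} (hr : a ≤ r) (hs : s ≤ b) (hx : x ∈ Ioo r s) (hy : y ∈ Ioo r s)
    (hfx : 0 < f x) (hfy : f y < 0) :
    ∀ᶠ n : ℕ in Filter.atTop, ∃ i, i < n ∧ grid a b n i ∈ Ioo r s ∧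
      Xor (0 < f (grid a b n i)) (0 < f (grid a b n (i + 1))) := by
  have hxI : x ∈ Ioo a b := ⟨by linarith [hx.1], by linarith [hx.2]⟩
  have hyI : y ∈ Ioo a b := ⟨by linarith [hy.1], by linarith [hy.2]⟩
  have cx := (hf x (Ioo_subset_Icc_self hxI)).continuousAt (Icc_mem_nhds hxI.1 hxI.2)
  have cy := (hf y (Ioo_subset_Icc_self hyI)).continuousAt (Icc_mem_nhds hyI.1 hyI.2)
  have ex : ∀ᶠ z in nhds x, 0 < f z ∧ r < z :=
    (cx.eventually_const_lt hfx).and (lt_mem_nhds hx.1)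
  have ey : ∀ᶠ z in nhds y, f z < 0 ∧ r < z :=
    (cy.eventually_lt_const hfy).and (lt_mem_nhds hy.1)
  obtain ⟨ε, hε, hεx⟩ := Metric.eventually_nhds_iff.1 ex
  obtain ⟨η, hη, hηy⟩ := Metric.eventually_nhds_iff.1 ey
  have hlim : Filter.Tendsto (fun n : ℕ => (b - a) / (n:ℝ)) Filter.atTop (nhds 0) :=
    tendsto_const_div_atTop_nhds_zero_nat _
  filter_upwards [hlim.eventually_lt_const hε, hlim.eventually_lt_const hη,
    Filter.eventually_gt_atTop 0] with n h1 h2 hn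
  obtain ⟨i, hi, hi1, hi2⟩ := exists_grid hab hxI hn
  obtain ⟨j, hj, hj1, hj2⟩ := exists_grid hab hyI hn
  have hpi := hεx (y := grid a b n i) (by
    rw [Real.dist_eq, abs_of_nonpos (by linarith)]; linarith)
  have hpj := hηy (y := grid a b n j) (by
    rw [Real.dist_eq, abs_of_nonpos (by linarith)]; linarith)
  rcases le_total i j with hij | hij
  · obtain ⟨k, hk1, hk2, hk3⟩ := discrete_change (fun i => 0 < f (grid a b n i)) hij
      (fun h => absurd (h.1 hpi.1) (not_lt.2 hpj.1.le))
    refine ⟨k, by omega, ⟨?_, ?_⟩, hk3⟩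
    · exact hpi.2.trans_le (grid_mono hab n hk1)
    · exact (grid_mono hab n hk2.le).trans_lt (hj1.trans_lt hy.2)
  · obtain ⟨k, hk1, hk2, hk3⟩ := discrete_change (fun i => 0 < f (grid a b n i)) hij
      (fun h => absurd (h.2 hpi.1) (not_lt.2 hpj.1.le))
    refine ⟨k, by omega, ⟨?_, ?_⟩, hk3⟩
    · exact hpj.2.trans_le (grid_mono hab n hk1)
    · exact (grid_mono hab n hk2.le).trans_lt (hi1.trans_lt hx.2)

/-- number of sign changes along the uniform partition -/
def signChanges (γ : ℝ → E3) (a b : ℝ) (n : ℕ) (w : E3) : ℝ≥0∞ :=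
  ∑ i ∈ Finset.range n, ({w : E3 | Xor (w ∈ capH (γ (grid a b n i)))
    (w ∈ capH (γ (grid a b n (i + 1))))}).indicator 1 w

lemma card_le_signChanges {a b : ℝ} (hab : a < b) {γ : ℝ → E3}
    (hcont : ContinuousOn γ (Icc a b)) {w : E3} (hw : Good γ a b w) (F : Finset ℝ)
    (hF : ∀ t ∈ F, t ∈ Ioo a b ∧ ⟪γ t, w⟫ = √2 / 2 * ‖w‖) :
    ∀ᶠ n : ℕ in Filter.atTop, (F.card : ℝ≥0∞) ≤ signChanges γ a b n w := by
  classical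
  have hδ : ∀ᶠ δ : ℝ in nhdsWithin 0 (Ioi 0), ∀ t ∈ F, ∀ t' ∈ F,
      a ≤ t - δ ∧ t + δ ≤ b ∧ (t < t' → t + δ < t' - δ) := by
    apply Filter.Eventually.filter_mono nhdsWithin_le_nhds
    rw [Finset.eventually_all]
    intro t ht
    rw [Finset.eventually_all]
    intro t' ht'
    have h1 : ∀ᶠ δ : ℝ in nhds 0, δ < t - a := gt_mem_nhds (by linarith [(hF t ht).1.1])
    have h2 : ∀ᶠ δ : ℝ in nhds 0, δ < b - t := gt_mem_nhds (by linarith [(hF t ht).1.2])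
    have h3 : ∀ᶠ δ : ℝ in nhds 0, (t < t' → δ < (t' - t) / 2) := by
      by_cases h : t < t'
      · have : ∀ᶠ δ : ℝ in nhds 0, δ < (t' - t) / 2 := gt_mem_nhds (by linarith)
        filter_upwards [this] with δ hδ _ using hδ
      · exact Filter.Eventually.of_forall fun δ h' => absurd h' h
    filter_upwards [h1, h2, h3] with δ h1 h2 h3
    exact ⟨by linarith, by linarith, fun h => by linarith [h3 h]⟩
  obtain ⟨δ, hδ, hδ0⟩ := (hδ.and self_mem_nhdsWithin).exists
  have hδ0 : 0 < δ := hδ0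
  have hf : ContinuousOn (fun t => ⟪γ t, w⟫ - √2 / 2 * ‖w‖) (Icc a b) :=
    (hcont.inner continuousOn_const).sub continuousOn_const
  have hev : ∀ᶠ n : ℕ in Filter.atTop, ∀ t ∈ F, ∃ i, i < n ∧
      grid a b n i ∈ Ioo (t - δ) (t + δ) ∧ Xor (w ∈ capH (γ (grid a b n i)))
    (w ∈ capH (γ (grid a b n (i + 1)))) := by
    rw [Finset.eventually_all]
    intro t ht
    obtain ⟨h1, h2, -⟩ := hδ t ht t ht
    obtain ⟨⟨x, hx, hx1⟩, ⟨y, hy, hy1⟩⟩ := hw.2 t (hF t ht).1 (hF t ht).2 (t - δ) (t + δ) h1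
      (by linarith) (by linarith) h2
    have := exists_change hab hf h1 h2 hx hy (by linarith) (by linarith)
    simpa only [capH, mem_ofPred_eq, sub_pos] using this
  filter_upwards [hev] with n hn
  choose! g hg1 hg2 hg3 using hn
  have hcard : F.card ≤ ((Finset.range n).filter (fun i => Xor (w ∈ capH (γ (grid a b n i)))
    (w ∈ capH (γ (grid a b n (i + 1)))))).card := by
    apply Finset.card_le_card_of_injOn g
    · intro t ht
      simp only [Finset.coe_filter, Finset.mem_range, mem_ofPred_eq]
      exact ⟨hg1 t ht, hg3 t ht⟩
    · intro t ht t' ht' he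
      have m1 := hg2 t ht
      have m2 := hg2 t' ht'
      rw [← he] at m2
      rcases lt_trichotomy t t' with h | h | h
      · have := (hδ t ht t' ht').2.2 h
        linarith [m1.2, m2.1]
      · exact h
      · have := (hδ t' ht' t ht).2.2 h
        linarith [m1.1, m2.2]
  have e : signChanges γ a b n w =
      (((Finset.range n).filter (fun i => Xor (w ∈ capH (γ (grid a b n i)))
    (w ∈ capH (γ (grid a b n (i + 1)))))).card : ℝ≥0∞) := by
    rw [signChanges, Finset.card_filter, Nat.cast_sum]
    apply Finset.sum_congr rfl
    intro i _
    simp [indicator_apply]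
  rw [e]
  exact_mod_cast hcard

lemma exists_two_hits {a b : ℝ} (hab : a < b) {γ : ℝ → E3}
    (hclosed : γ a = γ b) (hcont : ContinuousOn γ (Icc a b)) {w : E3} (hw : Good γ a b w)
    (hmax : ∃ t ∈ Icc a b, √2 / 2 * ‖w‖ ≤ ⟪γ t, w⟫)
    (hmin : ∃ t ∈ Icc a b, ⟪γ t, w⟫ < √2 / 2 * ‖w‖) :
    ∃ t₁ ∈ Ioo a b, ∃ t₂ ∈ Ioo a b, t₁ < t₂ ∧ ⟪γ t₁, w⟫ = √2 / 2 * ‖w‖ ∧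
      ⟪γ t₂, w⟫ = √2 / 2 * ‖w‖ := by
  have hmax' : ∃ t ∈ Icc a b, √2 / 2 * ‖w‖ < ⟪γ t, w⟫ := by
    obtain ⟨t, ht, hle⟩ := hmax
    rcases hle.lt_or_eq with h | h
    · exact ⟨t, ht, h⟩
    · rcases ht.1.eq_or_lt with rfl | h1
      · exact absurd h.symm hw.1
      · rcases ht.2.eq_or_lt with rfl | h2
        · rw [← hclosed] at h
          exact absurd h.symm hw.1
        · obtain ⟨⟨x, hx, hx1⟩, -⟩ := hw.2 t ⟨h1, h2⟩ h.symm a b le_rfl h1 h2 le_rfl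
          exact ⟨x, Ioo_subset_Icc_self hx, hx1⟩
  have hf : ContinuousOn (fun t => ⟪γ t, w⟫) (Icc a b) := hcont.inner continuousOn_const
  rcases lt_or_gt_of_ne hw.1 with h | h
  · obtain ⟨t, ht, hlt⟩ := hmax'
    have h1 : a < t := by
      rcases ht.1.eq_or_lt with rfl | h1
      · linarith
      · exact h1
    have h2 : t < b := by
      rcases ht.2.eq_or_lt with rfl | h2
      · rw [hclosed] at h; linarith
      · exact h2
    obtain ⟨x, hx, hx1⟩ := intermediate_value_Ioo h1.le (hf.mono (Icc_subset_Icc le_rfl h2.le))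
      ⟨h, hlt⟩
    obtain ⟨y, hy, hy1⟩ := intermediate_value_Ioo' h2.le (hf.mono (Icc_subset_Icc h1.le le_rfl))
      ⟨by rw [hclosed] at h; exact h, hlt⟩
    exact ⟨x, ⟨hx.1, hx.2.trans h2⟩, y, ⟨h1.trans hy.1, hy.2⟩, hx.2.trans hy.1, hx1, hy1⟩
  · obtain ⟨t, ht, hlt⟩ := hmin
    have h1 : a < t := by
      rcases ht.1.eq_or_lt with rfl | h1
      · linarith
      · exact h1
    have h2 : t < b := by
      rcases ht.2.eq_or_lt with rfl | h2
      · rw [hclosed] at h; linarith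
      · exact h2
    obtain ⟨x, hx, hx1⟩ := intermediate_value_Ioo' h1.le (hf.mono (Icc_subset_Icc le_rfl h2.le))
      ⟨hlt, h⟩
    obtain ⟨y, hy, hy1⟩ := intermediate_value_Ioo h2.le (hf.mono (Icc_subset_Icc h1.le le_rfl))
      ⟨hlt, by rw [hclosed] at h; exact h⟩
    exact ⟨x, ⟨hx.1, hx.2.trans h2⟩, y, ⟨h1.trans hy.1, hy.2⟩, hx.2.trans hy.1, hx1, hy1⟩

lemma measurableSet_change (u v : E3) : MeasurableSet {w : E3 | Xor (w ∈ capH u) (w ∈ capH v)} := by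
  have h1 := (isOpen_capH u).measurableSet
  have h2 := (isOpen_capH v).measurableSet
  have : {w : E3 | Xor (w ∈ capH u) (w ∈ capH v)} = (capH u \ capH v) ∪ (capH v \ capH u) := rfl
  rw [this]
  exact (h1.diff h2).union (h2.diff h1)

lemma measurable_signChanges (γ : ℝ → E3) (a b : ℝ) (n : ℕ) :
    Measurable (signChanges γ a b n) := by
  unfold signChanges
  apply Finset.measurable_fun_sum
  intro i _
  exact measurable_one.indicator (measurableSet_change _ _)

lemma lintegral_signChanges_le {a b : ℝ} (hab : a < b) {γ : ℝ → E3} {C : ℝ}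
    (hsphere : ∀ t ∈ Icc a b, ‖γ t‖ = 1)
    (hlip : ∀ x ∈ Icc a b, ∀ y ∈ Icc a b, ‖γ x - γ y‖ ≤ C * |x - y|)
    {n : ℕ} (hn : C * (b - a) / n ≤ 1) :
    ∫⁻ w in Metric.ball (0 : E3) 1, signChanges γ a b n w ≤
      ENNReal.ofReal (n * (2 * √2 / 3 * (2 * Real.arcsin (C * (b - a) / n / 2)))) := by
  unfold signChanges
  rw [lintegral_finsetSum _ fun i _ => measurable_one.indicator (measurableSet_change _ _)]
  have : ∀ i ∈ Finset.range n, ∫⁻ w in Metric.ball (0 : E3) 1,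
      ({w : E3 | Xor (w ∈ capH (γ (grid a b n i)))
        (w ∈ capH (γ (grid a b n (i + 1))))}).indicator 1 w ≤
      ENNReal.ofReal (2 * √2 / 3 * (2 * Real.arcsin (C * (b - a) / n / 2))) := by
    intro i hi
    rw [Finset.mem_range] at hi
    have m1 := grid_mem hab hi.le
    have m2 := grid_mem (i := i + 1) hab hi
    rw [lintegral_indicator_one (measurableSet_change _ _),
      Measure.restrict_apply (measurableSet_change _ _)]
    refine le_trans (measure_mono ?_) (crossing_le (hsphere _ m1) (hsphere _ m2)
      ((hlip _ m1 _ m2).trans ?_) hn)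
    · rintro w ⟨h1, h2⟩
      exact ⟨by simpa using h2, h1⟩
    · apply le_of_eq
      have : grid a b n i - grid a b n (i + 1) = -((b - a) / n) := by
        unfold grid; push_cast; ring
      rw [this, abs_neg, abs_of_nonneg (div_nonneg (by linarith) (Nat.cast_nonneg n))]
      ring
  refine (Finset.sum_le_sum this).trans ?_
  rw [Finset.sum_const, Finset.card_range, nsmul_eq_mul, ENNReal.ofReal_mul (Nat.cast_nonneg n),
    ENNReal.ofReal_natCast]

lemma tendsto_arcsin {L : ℝ} (hL : 0 < L) :
    Filter.Tendsto (fun n : ℕ => (n : ℝ) * (2 * √2 / 3 * (2 * Real.arcsin (L / n / 2))))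
      Filter.atTop (nhds (2 * √2 / 3 * L)) := by
  have hd := (Real.hasDerivAt_arcsin (x := 0) (by norm_num) (by norm_num)).tendsto_slope_zero
  simp only [zero_add, Real.arcsin_zero, sub_zero, smul_eq_mul] at hd
  have ht : Filter.Tendsto (fun n : ℕ => L / (n:ℝ) / 2) Filter.atTop (nhdsWithin 0 {0}ᶜ) := by
    apply tendsto_nhdsWithin_of_tendsto_nhds_of_eventually_within
    · have := (tendsto_const_div_atTop_nhds_zero_nat L).div_const 2
      simpa using this
    · filter_upwards [Filter.eventually_gt_atTop 0] with n hn
      have : (0:ℝ) < n := by exact_mod_cast hn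
      simp only [mem_compl_iff, mem_singleton_iff]
      positivity
  have h := (hd.comp ht).const_mul (2 * √2 / 3 * L)
  have e : 2 * √2 / 3 * L * (1 / √(1 - 0 ^ 2)) = 2 * √2 / 3 * L := by simp
  rw [e] at h
  refine h.congr' ?_
  filter_upwards [Filter.eventually_gt_atTop 0] with n hn
  have : (0:ℝ) < n := by exact_mod_cast hn
  simp only [Function.comp]
  field_simp

lemma ae_two {a b : ℝ} (hab : a < b) {γ : ℝ → E3} {C : ℝ} (hC : 0 ≤ C)
    (hsphere : ∀ t ∈ Icc a b, ‖γ t‖ = 1) (hclosed : γ a = γ b)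
    (hlip : ∀ x ∈ Icc a b, ∀ y ∈ Icc a b, ‖γ x - γ y‖ ≤ C * |x - y|)
    (hcont : ContinuousOn γ (Icc a b)) (hL : C * (b - a) = 4 * π / √2)
    (hcov : ∀ w : E3, w ≠ 0 → ∃ t ∈ Icc a b, √2 / 2 * ‖w‖ ≤ ⟪γ t, w⟫) :
    ∀ᵐ w ∂(volume.restrict (Metric.ball (0 : E3) 1)),
      ({t ∈ Ico a b | ⟪γ t, w⟫ = √2 / 2 * ‖w‖}).encard = 2 := by
  have hgood : ∀ᵐ w ∂(volume.restrict (Metric.ball (0 : E3) 1)), Good γ a b w :=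
    ae_restrict_of_ae (ae_good hab hC hsphere hlip hcont)
  have hne : ∀ᵐ w ∂(volume.restrict (Metric.ball (0 : E3) 1)), w ≠ 0 :=
    ae_restrict_of_ae (Measure.ae_ne volume 0)
  let g : E3 → ℝ≥0∞ := fun w => Filter.liminf (fun n => signChanges γ a b n w) Filter.atTop
  have hhits : ∀ w, Good γ a b w → w ≠ 0 →
      ∃ t₁ ∈ Ioo a b, ∃ t₂ ∈ Ioo a b, t₁ < t₂ ∧ ⟪γ t₁, w⟫ = √2 / 2 * ‖w‖ ∧
      ⟪γ t₂, w⟫ = √2 / 2 * ‖w‖ := by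
    intro w hw hw0
    apply exists_two_hits hab hclosed hcont hw (hcov w hw0)
    obtain ⟨t, ht, h⟩ := hcov (-w) (neg_ne_zero.2 hw0)
    refine ⟨t, ht, ?_⟩
    rw [norm_neg, inner_neg_right] at h
    have : 0 < √2 / 2 * ‖w‖ := by
      have := norm_pos_iff.2 hw0
      positivity
    linarith
  have hcard : ∀ w, Good γ a b w → ∀ F : Finset ℝ,
      (∀ t ∈ F, t ∈ Ioo a b ∧ ⟪γ t, w⟫ = √2 / 2 * ‖w‖) → (F.card : ℝ≥0∞) ≤ g w :=
    fun w hw F hF => Filter.le_liminf_of_le (by isBoundedDefault)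
      (card_le_signChanges hab hcont hw F hF)
  have hge : (fun _ => (2 : ℝ≥0∞)) ≤ᵐ[volume.restrict (Metric.ball (0 : E3) 1)] g := by
    filter_upwards [hgood, hne] with w hw hw0
    obtain ⟨t₁, h1, t₂, h2, h12, e1, e2⟩ := hhits w hw hw0
    have := hcard w hw {t₁, t₂} (by
      intro t ht
      rw [Finset.mem_insert, Finset.mem_singleton] at ht
      rcases ht with rfl | rfl
      · exact ⟨h1, e1⟩
      · exact ⟨h2, e2⟩)
    rw [Finset.card_pair h12.ne] at this
    exact_mod_cast this
  have hLpos : 0 < 4 * π / √2 := by positivity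
  have hgint : ∫⁻ w in Metric.ball (0 : E3) 1, g w ≤ ENNReal.ofReal (2 * √2 / 3 * (4 * π / √2)) := by
    refine (lintegral_liminf_le fun n => measurable_signChanges γ a b n).trans ?_
    have ht := ENNReal.tendsto_ofReal (tendsto_arcsin hLpos)
    rw [← ht.liminf_eq]
    refine Filter.liminf_le_liminf ?_ (by isBoundedDefault) (by isBoundedDefault)
    have hlim := (tendsto_const_div_atTop_nhds_zero_nat (4 * π / √2)).eventually_lt_const one_pos
    filter_upwards [hlim] with n hn
    have := lintegral_signChanges_le hab hsphere hlip (n := n) (by rw [hL]; exact hn.le)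
    rwa [hL] at this
  have hconst : ∫⁻ _ in Metric.ball (0 : E3) 1, (2 : ℝ≥0∞) =
      ENNReal.ofReal (2 * √2 / 3 * (4 * π / √2)) := by
    rw [setLIntegral_const, EuclideanSpace.volume_ball_fin_three]
    rw [show (2 : ℝ≥0∞) = ENNReal.ofReal 2 by simp]
    simp only [ENNReal.ofReal_one, one_pow, one_mul]
    rw [← ENNReal.ofReal_mul (by norm_num)]
    congr 1
    have : √2 ≠ 0 := by positivity
    field_simp
  have hmeas : Measurable g := Measurable.liminf fun n => measurable_signChanges γ a b n
  have heq := ae_eq_of_ae_le_of_lintegral_le hge (by rw [hconst]; exact ENNReal.ofReal_ne_top)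
    hmeas.aemeasurable (by rw [hconst]; exact hgint)
  filter_upwards [hgood, hne, heq] with w hw hw0 hg
  apply le_antisymm
  · by_contra hcon
    rw [not_le] at hcon
    have h3 : (3 : ℕ∞) ≤ ({t ∈ Ico a b | ⟪γ t, w⟫ = √2 / 2 * ‖w‖}).encard := by
      have := Order.add_one_le_of_lt hcon
      exact le_trans (by norm_num) this
    obtain ⟨F, hF, hF3⟩ := Set.exists_subset_encard_eq h3
    have hfin : F.Finite := Set.finite_of_encard_eq_coe (k := 3) hF3
    have := hcard w hw hfin.toFinset (by
      intro t ht
      have ht := hF ((Set.Finite.mem_toFinset hfin).1 ht)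
      refine ⟨⟨lt_of_le_of_ne ht.1.1 ?_, ht.1.2⟩, ht.2⟩
      rintro rfl
      exact hw.1 ht.2)
    rw [← hg] at this
    rw [hfin.encard_eq_coe_toFinset_card] at hF3
    have h3' : hfin.toFinset.card = 3 := by exact_mod_cast hF3
    rw [h3'] at this
    have h32 : (3 : ℕ) ≤ 2 := by exact_mod_cast this
    omega
  · obtain ⟨t₁, h1, t₂, h2, h12, e1, e2⟩ := hhits w hw hw0
    rw [← Set.encard_pair h12.ne]
    apply Set.encard_le_encard
    rintro t (rfl | rfl)
    · exact ⟨Ioo_subset_Ico_self h1, e1⟩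
    · exact ⟨Ioo_subset_Ico_self h2, e2⟩

lemma ae_sphere_of_ae_ball {P : E3 → Prop}
    (h : ∀ᵐ w ∂(volume.restrict (Metric.ball (0 : E3) 1)), P w)
    (hP : ∀ p : E3, ‖p‖ = 1 → ∀ r : ℝ, 0 < r → P (r • p) → P p) :
    ∀ᵐ p : Metric.sphere (0 : E3) 1 ∂((volume : Measure E3).toSphere), P p := by
  rw [ae_restrict_iff' Metric.isOpen_ball.measurableSet] at h
  have mp := (volume : Measure E3).measurePreserving_homeomorphUnitSphereProd
  have hsub : ∀ᵐ x : ({0}ᶜ : Set E3) ∂(volume.comap (Subtype.val)),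
      (x : E3) ∈ Metric.ball (0 : E3) 1 → P x := by
    have emb := MeasurableEmbedding.subtype_coe (measurableSet_singleton (0 : E3)).compl
    refine (emb.ae_map_iff (p := fun w : E3 => w ∈ Metric.ball (0 : E3) 1 → P w)).1 ?_
    rw [emb.map_comap]
    exact ae_restrict_of_ae h
  have mp' := MeasurePreserving.symm (homeomorphUnitSphereProd E3).toMeasurableEquiv mp
  have h2 := mp'.quasiMeasurePreserving.ae hsub
  have h3 := Measure.ae_ae_of_ae_prod h2
  filter_upwards [h3] with p hp
  have hpos : (Measure.volumeIoiPow (Module.finrank ℝ E3 - 1)) (Iio ⟨1, mem_Ioi.2 one_pos⟩) ≠ 0 := by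
    rw [Measure.volumeIoiPow_apply_Iio]
    simp
    positivity
  have hfreq := frequently_ae_mem_iff.2 hpos
  obtain ⟨r, hr1, hr2⟩ := (hfreq.and_eventually hp).exists
  have hr0 : 0 < (r : ℝ) := r.2
  have hr1' : (r : ℝ) < 1 := hr1
  have hpn : ‖(p : E3)‖ = 1 := by simp
  have hval : ((((homeomorphUnitSphereProd E3).toMeasurableEquiv.symm (p, r)) : ({0}ᶜ : Set E3)) : E3)
      = (r : ℝ) • (p : E3) := rfl
  apply hP p hpn r hr0
  rw [← hval]
  apply hr2
  rw [hval]
  simp [norm_smul, abs_of_pos hr0, hr1']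

/-- For a closed constant speed curve on the unit sphere of length `4π/√2` within
spherical distance `π/4` of every point of the sphere, almost every circle of spherical
radius `π/4` meets the curve in exactly two parameters. -/
theorem circle_meets_curve_in_two_points
    (a b : ℝ) (hab : a < b) (γ : ℝ → E3) (C : ℝ≥0)
    (hsphere : ∀ t ∈ Set.Icc a b, ‖γ t‖ = 1)
    (hclosed : γ a = γ b)
    (hspeed : HasConstantSpeedOnWith γ (Set.Icc a b) C)
    (hlen : eVariationOn γ (Set.Icc a b) = ENNReal.ofReal (4 * π / Real.sqrt 2))
    (hcover : ∀ p : E3, ‖p‖ = 1 → ∃ t ∈ Set.Icc a b, Real.arccos ⟪p, γ t⟫ ≤ π / 4) :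
    ∀ᵐ p : Metric.sphere (0 : E3) 1 ∂((volume : Measure E3).toSphere),
      ({t ∈ Set.Ico a b | Real.arccos ⟪γ t, (p : E3)⟫ = π / 4}).encard = 2 := by
  have hlip0 : ∀ x ∈ Icc a b, ∀ y ∈ Icc a b, x ≤ y → ‖γ x - γ y‖ ≤ C * (y - x) := by
    intro x hx y hy hxy
    have h1 := hspeed hx hy
    have h2 := eVariationOn.edist_le γ (s := Icc a b ∩ Icc x y) ⟨hx, le_rfl, hxy⟩
      ⟨hy, hxy, le_rfl⟩
    rw [h1, edist_dist, ENNReal.ofReal_le_ofReal_iff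
      (mul_nonneg C.coe_nonneg (sub_nonneg.2 hxy)), dist_eq_norm] at h2
    exact h2
  have hlip : ∀ x ∈ Icc a b, ∀ y ∈ Icc a b, ‖γ x - γ y‖ ≤ C * |x - y| := by
    intro x hx y hy
    rcases le_total x y with h | h
    · rw [abs_sub_comm, abs_of_nonneg (sub_nonneg.2 h)]
      exact hlip0 x hx y hy h
    · rw [abs_of_nonneg (sub_nonneg.2 h), norm_sub_rev]
      exact hlip0 y hy x hx h
  have hcont : ContinuousOn γ (Icc a b) := by
    have : LipschitzOnWith C γ (Icc a b) := by
      apply LipschitzOnWith.of_dist_le_mul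
      intro x hx y hy
      rw [dist_eq_norm, Real.dist_eq]
      exact hlip x hx y hy
    exact this.continuousOn
  have hL : (C : ℝ) * (b - a) = 4 * π / √2 := by
    have h1 := hspeed (left_mem_Icc.2 hab.le) (right_mem_Icc.2 hab.le)
    rw [inter_self, hlen, ENNReal.ofReal_eq_ofReal_iff (show 0 ≤ 4 * π / √2 by positivity)
      (mul_nonneg C.coe_nonneg (sub_nonneg.2 hab.le))] at h1
    exact h1.symm
  have hcov : ∀ w : E3, w ≠ 0 → ∃ t ∈ Icc a b, √2 / 2 * ‖w‖ ≤ ⟪γ t, w⟫ := by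
    intro w hw
    have hn : 0 < ‖w‖ := norm_pos_iff.2 hw
    obtain ⟨t, ht, h⟩ := hcover (‖w‖⁻¹ • w) (by
      rw [norm_smul, norm_inv, norm_norm, inv_mul_cancel₀ hn.ne'])
    refine ⟨t, ht, ?_⟩
    rw [Real.arccos_le_pi_div_four, real_inner_comm, inner_smul_right] at h
    rw [inv_mul_eq_div, le_div_iff₀ hn] at h
    exact h
  have key := ae_two hab C.coe_nonneg hsphere hclosed hlip hcont hL hcov
  have := ae_sphere_of_ae_ball key (by
    intro p hp r hr h
    convert h using 5 with t
    rw [inner_smul_right, norm_smul, Real.norm_of_nonneg hr.le]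
    constructor
    · intro h; rw [h]; ring
    · intro h
      have : r * (⟪γ t, p⟫ - √2 / 2 * ‖p‖) = 0 := by linarith
      rcases mul_eq_zero.1 this with h | h
      · exact absurd h hr.ne'
      · linarith)
  filter_upwards [this] with p hp
  have hpn : ‖(p : E3)‖ = 1 := by simp
  rw [← hp]
  congr 1
  ext t
  simp only [mem_ofPred_eq, and_congr_right_iff]
  intro ht
  have hin : |⟪γ t, (p : E3)⟫| ≤ 1 := by
    have := abs_real_inner_le_norm (γ t) (p : E3)
    rwa [hsphere t ⟨ht.1, ht.2.le⟩, hpn, mul_one] at this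
  rw [hpn, mul_one]
  constructor
  · intro h
    rw [← Real.cos_arccos (abs_le.1 hin).1 (abs_le.1 hin).2, h, Real.cos_pi_div_four]
  · intro h
    rw [h, ← Real.cos_pi_div_four, Real.arccos_cos (by positivity) (by linarith [Real.pi_pos])]
end
end

section
/- Let γ : [a,b] → S² ⊂ ℝ³ be a closed constant-speed curve of length L(γ) = 4π/√2 such that every point of S² has spherical distance at most π/4 from the image of γ. Then for every p ∈ S², the portion of γ lying strictly outside the circle C_{π/4}(p) has length at least π; that is, ∫_{{t ∈ [a,b] : d(γ(t),p) > π/4}} |γ′(t)| dt ≥ π. -/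
open MeasureTheory Set Real
open scoped ENNReal NNReal RealInnerProductSpace

noncomputable section

/-- Clamp to `[-cos (π/4), cos (π/4)]`. -/
def clampC (x : ℝ) : ℝ := max (-cos (π / 4)) (min x (cos (π / 4)))

lemma cosq_pos : 0 < cos (π / 4) := by rw [cos_pi_div_four]; positivity

lemma cosq_lt_one : cos (π / 4) < 1 := by
  rw [← cos_zero]
  exact cos_lt_cos_of_nonneg_of_le_pi le_rfl (by linarith [pi_pos]) (by positivity)

lemma arccos_neg_cosq : arccos (-cos (π / 4)) = 3 * π / 4 := by
  rw [arccos_neg, arccos_cos (by positivity) (by linarith [pi_pos])]; ring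

lemma arccos_cosq : arccos (cos (π / 4)) = π / 4 :=
  arccos_cos (by positivity) (by linarith [pi_pos])

lemma clampC_mem (x : ℝ) : clampC x ∈ Icc (-cos (π / 4)) (cos (π / 4)) := by
  have := cosq_pos
  constructor
  · exact le_max_left _ _
  · exact max_le (by linarith) (min_le_right _ _)

lemma lt_arccos_iff {x : ℝ} (h1 : -1 ≤ x) (h2 : x ≤ 1) :
    π / 4 < arccos x ↔ x < cos (π / 4) := by
  have := cosq_pos
  have := cosq_lt_one
  conv_lhs => rw [← arccos_cosq]
  exact strictAntiOn_arccos.lt_iff_gt ⟨by linarith, by linarith⟩ ⟨h1, h2⟩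

lemma exists_lip_g {f : ℝ → E3} {C : ℝ≥0} (hf : LipschitzWith C f) (p : E3) :
    ∃ K : ℝ≥0, LipschitzWith K (fun t => arccos (clampC ⟪f t, p⟫)) := by
  have h0 := cosq_pos
  have h1 := cosq_lt_one
  have hA : ContDiffOn ℝ 1 arccos (Icc (-cos (π / 4)) (cos (π / 4))) := by
    intro x hx
    exact (contDiffAt_arccos (by linarith [hx.1]) (by linarith [hx.2])).contDiffWithinAt
  obtain ⟨K, hK⟩ := hA.exists_lipschitzOnWith (by decide) (convex_Icc _ _) isCompact_Icc
  have hh : LipschitzWith (‖p‖₊ * C) (fun t => ⟪f t, p⟫) := by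
    refine LipschitzWith.of_dist_le_mul fun x y => ?_
    rw [Real.dist_eq, ← inner_sub_left]
    have := hf.dist_le_mul x y
    rw [dist_eq_norm] at this
    calc |⟪f x - f y, p⟫| ≤ ‖f x - f y‖ * ‖p‖ := abs_real_inner_le_norm _ _
      _ ≤ (C * dist x y) * ‖p‖ := by gcongr
      _ = _ := by push_cast; ring
  have hm : LipschitzWith (‖p‖₊ * C) (fun t => clampC ⟪f t, p⟫) :=
    (hh.min_const _).const_max _
  refine ⟨K * (‖p‖₊ * C), ?_⟩
  rw [← lipschitzOnWith_univ] at hm ⊢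
  exact hK.comp hm (fun t _ => clampC_mem _)

lemma deriv_bound {f : ℝ → E3} (hn : ∀ t, ‖f t‖ = 1) {p : E3} (hp : ‖p‖ = 1) {t : ℝ}
    (hd : DifferentiableAt ℝ f t) :
    |deriv (fun t => arccos (clampC ⟪f t, p⟫)) t| ≤
      {s | π / 4 < arccos ⟪f s, p⟫}.indicator (fun s => ‖deriv f s‖) t := by
  have h0 := cosq_pos
  have h1 := cosq_lt_one
  have hb : ∀ t, |⟪f t, p⟫| ≤ 1 := fun t => by
    have := abs_real_inner_le_norm (f t) p
    rwa [hn, hp, one_mul] at this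
  have hb1 := fun t => (abs_le.1 (hb t)).1
  have hb2 := fun t => (abs_le.1 (hb t)).2
  have hnn : 0 ≤ {s | π / 4 < arccos ⟪f s, p⟫}.indicator (fun s => ‖deriv f s‖) t :=
    indicator_nonneg (fun _ _ => norm_nonneg _) _
  have hrange : ∀ s, arccos (clampC ⟪f s, p⟫) ∈ Icc (π / 4) (3 * π / 4) := fun s => by
    have := clampC_mem ⟪f s, p⟫
    have h2 := antitone_arccos this.2
    have h3 := antitone_arccos this.1
    rw [arccos_cosq] at h2
    rw [arccos_neg_cosq] at h3
    exact ⟨h2, h3⟩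
  rcases le_or_gt (cos (π / 4)) ⟪f t, p⟫ with hc | hc
  · have hmin : IsLocalMin (fun t => arccos (clampC ⟪f t, p⟫)) t := by
      refine Filter.Eventually.of_forall fun s => ?_
      have : clampC ⟪f t, p⟫ = cos (π / 4) := by
        rw [clampC, min_eq_right hc, max_eq_right (by linarith)]
      simp only [this, arccos_cosq]
      exact (hrange s).1
    rw [hmin.deriv_eq_zero, abs_zero]; exact hnn
  rcases le_or_gt ⟪f t, p⟫ (-cos (π / 4)) with hc' | hc'
  · have hmax : IsLocalMax (fun t => arccos (clampC ⟪f t, p⟫)) t := by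
      refine Filter.Eventually.of_forall fun s => ?_
      have : clampC ⟪f t, p⟫ = -cos (π / 4) := by
        rw [clampC, min_eq_left hc.le, max_eq_left hc']
      simp only [this, arccos_neg_cosq]
      exact (hrange s).2
    rw [hmax.deriv_eq_zero, abs_zero]; exact hnn
  rw [indicator_of_mem (by exact (lt_arccos_iff (hb1 t) (hb2 t)).2 hc)]
  have hf := hd.hasDerivAt
  have hh : HasDerivAt (fun t => ⟪f t, p⟫) ⟪deriv f t, p⟫ t := by
    simpa using hf.inner ℝ (hasDerivAt_const t p)
  have heq : (fun t => arccos (clampC ⟪f t, p⟫)) =ᶠ[nhds t] fun t => arccos ⟪f t, p⟫ := by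
    filter_upwards [hh.continuousAt.eventually_lt_const hc,
      hh.continuousAt.eventually_const_lt hc'] with s hs hs'
    rw [clampC, min_eq_left hs.le, max_eq_right hs'.le]
  have hperp : ⟪deriv f t, f t⟫ = 0 := by
    have h2 := hf.inner ℝ hf
    have h3 : (fun t => ⟪f t, f t⟫) = fun _ => (1 : ℝ) := by
      funext s; rw [real_inner_self_eq_norm_sq, hn]; norm_num
    rw [h3] at h2
    have h4 := h2.unique (hasDerivAt_const t (1 : ℝ))
    rw [real_inner_comm (deriv f t)] at h4
    rw [real_inner_comm] at h4
    have h5 := real_inner_comm (deriv f t) (f t)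
    linarith
  set x := ⟪f t, p⟫ with hx
  have hg : HasDerivAt (fun t => arccos ⟪f t, p⟫) (-(1 / √(1 - x ^ 2)) * ⟪deriv f t, p⟫) t :=
    (hasDerivAt_arccos (by linarith) (by linarith)).comp t hh
  rw [heq.deriv_eq, hg.deriv]
  have hpos : 0 < 1 - x ^ 2 := by nlinarith
  have hs : 0 < √(1 - x ^ 2) := sqrt_pos.2 hpos
  have hnorm : ‖p - x • f t‖ = √(1 - x ^ 2) := by
    rw [eq_comm, sqrt_eq_iff_mul_self_eq hpos.le (norm_nonneg _), ← real_inner_self_eq_norm_mul_norm]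
    rw [inner_sub_left, inner_sub_right, inner_sub_right, real_inner_smul_left,
      real_inner_smul_right, real_inner_smul_left, real_inner_smul_right,
      real_inner_self_eq_norm_sq, real_inner_self_eq_norm_sq, hn, hp, real_inner_comm, ← hx]
    ring
  have key : |⟪deriv f t, p⟫| ≤ ‖deriv f t‖ * √(1 - x ^ 2) := by
    rw [← hnorm]
    have : ⟪deriv f t, p⟫ = ⟪deriv f t, p - x • f t⟫ := by
      rw [inner_sub_right, real_inner_smul_right, hperp]; ring
    rw [this]
    exact abs_real_inner_le_norm _ _
  rw [abs_mul, abs_neg, abs_of_pos (by positivity : 0 < 1 / √(1 - x ^ 2)), one_div,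
    inv_mul_le_iff₀ hs, mul_comm]
  exact key

lemma measurableSet_out {f : ℝ → E3} (hf : Continuous f) (p : E3) :
    MeasurableSet {s | π / 4 < arccos ⟪f s, p⟫} := by
  apply IsOpen.measurableSet
  exact isOpen_lt continuous_const (continuous_arccos.comp (hf.inner continuous_const))

lemma intervalIntegrable_out {f : ℝ → E3} {C : ℝ≥0} (hf : LipschitzWith C f) (p : E3) (s t : ℝ) :
    IntervalIntegrable ({s | π / 4 < arccos ⟪f s, p⟫}.indicator (fun s => ‖deriv f s‖))
      volume s t := by
  have hm := measurableSet_out hf.continuous p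
  refine (intervalIntegrable_const (c := (C : ℝ))).mono_fun ?_ ?_
  · exact (((measurable_deriv f).norm).indicator hm).aestronglyMeasurable
  · refine Filter.Eventually.of_forall fun x => ?_
    refine (norm_indicator_le_norm_self _ _).trans ?_
    simp only [norm_norm]
    exact (norm_deriv_le_of_lipschitz hf).trans (le_abs_self _)

lemma abs_sub_le_integral {f : ℝ → E3} {C : ℝ≥0} (hf : LipschitzWith C f)
    (hn : ∀ t, ‖f t‖ = 1) {p : E3} (hp : ‖p‖ = 1) {s t : ℝ} (hst : s ≤ t) :
    |arccos (clampC ⟪f t, p⟫) - arccos (clampC ⟪f s, p⟫)| ≤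
      ∫ x in s..t, {s | π / 4 < arccos ⟪f s, p⟫}.indicator (fun s => ‖deriv f s‖) x := by
  obtain ⟨K, hK⟩ := exists_lip_g hf p
  have hac := (hK.lipschitzOnWith (s := uIcc s t)).absolutelyContinuousOnInterval
  rw [← hac.integral_deriv_eq_sub, ← Real.norm_eq_abs]
  refine intervalIntegral.norm_integral_le_of_norm_le hst ?_ (intervalIntegrable_out hf p s t)
  filter_upwards [hf.ae_differentiableAt_real] with x hx _
  exact deriv_bound hn hp hx

/-- For a closed constant speed curve on the unit sphere of length `4π/√2` within
spherical distance `π/4` of every point of the sphere, the portion of the curve lying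
strictly outside any circle of spherical radius `π/4` has length at least `π`. -/
theorem length_outside_circle_ge_pi
    (a b : ℝ) (hab : a < b) (γ : ℝ → E3) (C : ℝ≥0)
    (hsphere : ∀ t ∈ Set.Icc a b, ‖γ t‖ = 1)
    (hclosed : γ a = γ b)
    (hspeed : HasConstantSpeedOnWith γ (Set.Icc a b) C)
    (hlen : eVariationOn γ (Set.Icc a b) = ENNReal.ofReal (4 * π / Real.sqrt 2))
    (hcover : ∀ p : E3, ‖p‖ = 1 → ∃ t ∈ Set.Icc a b, Real.arccos ⟪p, γ t⟫ ≤ π / 4) :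
    ∀ p : E3, ‖p‖ = 1 →
      π ≤ ∫ t in {s ∈ Set.Icc a b | π / 4 < Real.arccos ⟪γ s, p⟫},
            ‖derivWithin γ (Set.Icc a b) t‖ := by
  intro p hp
  have hlip : LipschitzOnWith C γ (Icc a b) := by
    have hor : ∀ x ∈ Icc a b, ∀ y ∈ Icc a b, x ≤ y → dist (γ x) (γ y) ≤ C * dist x y := by
      intro x hx y hy hxy
      have h1 : edist (γ x) (γ y) ≤ eVariationOn γ (Icc a b ∩ Icc x y) :=
        eVariationOn.edist_le γ ⟨hx, le_rfl, hxy⟩ ⟨hy, hxy, le_rfl⟩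
      rw [hspeed hx hy, edist_dist] at h1
      have h0 : 0 ≤ (C : ℝ) * (y - x) := mul_nonneg C.2 (by linarith)
      rw [ENNReal.ofReal_le_ofReal_iff h0] at h1
      rwa [dist_comm x y, Real.dist_eq, abs_of_nonneg (by linarith)]
    refine LipschitzOnWith.of_dist_le_mul fun x hx y hy => ?_
    rcases le_total x y with h | h
    · exact hor x hx y hy h
    · rw [dist_comm, dist_comm x]; exact hor y hy x hx h
  set f : ℝ → E3 := fun t => γ (projIcc a b hab.le t) with hfdef
  have hf : LipschitzWith C f := by
    refine LipschitzWith.of_dist_le_mul fun x y => ?_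
    refine (hlip.dist_le_mul _ (projIcc a b hab.le x).2 _ (projIcc a b hab.le y).2).trans ?_
    have := (LipschitzWith.projIcc hab.le).dist_le_mul x y
    rw [NNReal.coe_one, one_mul] at this
    exact mul_le_mul_of_nonneg_left this C.2
  have hn : ∀ t, ‖f t‖ = 1 := fun t => hsphere _ (projIcc a b hab.le t).2
  have hfe : ∀ t ∈ Icc a b, f t = γ t := fun t ht => by
    simp only [hfdef, projIcc_of_mem hab.le ht]
  have htarget : ∫ t in {s ∈ Set.Icc a b | π / 4 < Real.arccos ⟪γ s, p⟫},
      ‖derivWithin γ (Set.Icc a b) t‖ =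
      ∫ x in a..b, {s | π / 4 < arccos ⟪f s, p⟫}.indicator (fun s => ‖deriv f s‖) x := by
    have hset : {s ∈ Set.Icc a b | π / 4 < Real.arccos ⟪γ s, p⟫} =
        Icc a b ∩ {s | π / 4 < arccos ⟪f s, p⟫} := by
      ext s
      simp only [mem_setOf_eq, mem_inter_iff]
      refine and_congr_right fun hs => ?_
      rw [hfe s hs]
    rw [hset, intervalIntegral.integral_of_le hab.le, ← integral_Icc_eq_integral_Ioc,
      setIntegral_indicator (measurableSet_out hf.continuous p)]
    refine setIntegral_congr_ae
      (measurableSet_Icc.inter (measurableSet_out hf.continuous p)) ?_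
    have ha : ∀ᵐ x : ℝ, x ≠ a := by simp [ae_iff, measure_singleton]
    have hb : ∀ᵐ x : ℝ, x ≠ b := by simp [ae_iff, measure_singleton]
    filter_upwards [ha, hb] with x hxa hxb hx
    have hnh : Icc a b ∈ nhds x :=
      Icc_mem_nhds (lt_of_le_of_ne hx.1.1 (Ne.symm hxa)) (lt_of_le_of_ne hx.1.2 hxb)
    rw [derivWithin_of_mem_nhds hnh]
    have : f =ᶠ[nhds x] γ := by
      filter_upwards [hnh] with s hs using hfe s hs
    rw [this.deriv_eq]
  rw [htarget]
  obtain ⟨t0, ht0, h0⟩ := hcover p hp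
  obtain ⟨t1, ht1, h1⟩ := hcover (-p) (by rw [norm_neg, hp])
  rw [real_inner_comm] at h0
  rw [inner_neg_left, arccos_neg, real_inner_comm] at h1
  rw [← hfe t0 ht0] at h0
  rw [← hfe t1 ht1] at h1
  have hc0 := cosq_pos
  have hbd : ∀ t, |⟪f t, p⟫| ≤ 1 := fun t => by
    have := abs_real_inner_le_norm (f t) p
    rwa [hn, hp, one_mul] at this
  have hbd1 := fun t => (abs_le.1 (hbd t)).1
  have hbd2 := fun t => (abs_le.1 (hbd t)).2
  have e0 : arccos (clampC ⟪f t0, p⟫) = π / 4 := by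
    have : cos (π / 4) ≤ ⟪f t0, p⟫ := by
      rw [← not_lt, ← lt_arccos_iff (hbd1 _) (hbd2 _), not_lt]; exact h0
    rw [clampC, min_eq_right this, max_eq_right (by linarith), arccos_cosq]
  have e1 : arccos (clampC ⟪f t1, p⟫) = 3 * π / 4 := by
    have : ⟪f t1, p⟫ ≤ -cos (π / 4) := by
      have h2 : ¬ (-⟪f t1, p⟫ < cos (π / 4)) := by
        rw [← lt_arccos_iff (by linarith [hbd2 t1]) (by linarith [hbd1 t1]), not_lt, arccos_neg]
        exact h1
      linarith
    rw [clampC, min_eq_left (by linarith), max_eq_left this, arccos_neg_cosq]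
  have eab : arccos (clampC ⟪f a, p⟫) = arccos (clampC ⟪f b, p⟫) := by
    rw [hfe a ⟨le_rfl, hab.le⟩, hfe b ⟨hab.le, le_rfl⟩, hclosed]
  have main : ∀ u v, a ≤ u → u ≤ v → v ≤ b →
      2 * |arccos (clampC ⟪f v, p⟫) - arccos (clampC ⟪f u, p⟫)| ≤
      ∫ x in a..b, {s | π / 4 < arccos ⟪f s, p⟫}.indicator (fun s => ‖deriv f s‖) x := by
    intro u v hau huv hvb
    have i1 := abs_sub_le_integral hf hn hp hau
    have i2 := abs_sub_le_integral hf hn hp huv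
    have i3 := abs_sub_le_integral hf hn hp hvb
    have hI := intervalIntegrable_out hf p
    rw [← intervalIntegral.integral_add_adjacent_intervals (hI a v) (hI v b),
      ← intervalIntegral.integral_add_adjacent_intervals (hI a u) (hI u v)]
    rw [eab] at i1
    have i4 := abs_sub_le (arccos (clampC ⟪f v, p⟫)) (arccos (clampC ⟪f b, p⟫))
      (arccos (clampC ⟪f u, p⟫))
    rw [abs_sub_comm (arccos (clampC ⟪f v, p⟫)) (arccos (clampC ⟪f b, p⟫)),
      abs_sub_comm (arccos (clampC ⟪f b, p⟫)) (arccos (clampC ⟪f u, p⟫))] at i4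
    linarith
  rcases le_total t0 t1 with h | h
  · have := main t0 t1 ht0.1 h ht1.2
    rw [e0, e1, abs_of_nonneg (by linarith [pi_pos])] at this
    linarith
  · have := main t1 t0 ht1.1 h ht0.2
    rw [e0, e1, abs_of_nonpos (by linarith [pi_pos])] at this
    linarith
end
end
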